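/- Let j ≥ 1 be odd and d = (3j+1)/2. The number of non-equivalent 1-equiparting matrices of size 2 × 4j equals C(j, (j+1)/2). -/

import Mathlib

/-- The `i`-th `2 × 4` block of a `2 × 4j` binary matrix. -/
def block2 {j : ℕ} (A : Fin 2 → Fin (4 * j) → Bool) (i : Fin j) :
    Fin 2 → Fin 4 → Bool :=
  fun r s => A r ⟨4 * i.val + s.val, by have := i.isLt; have := s.isLt; omega⟩

/-- A 2-bit Gray code: a `2 × 4` binary matrix whose columns list all vectors of
`{0,1}^2`, with consecutive columns differing in exactly one bit. -/
def IsGrayCode2 (M : Fin 2 → Fin 4 → Bool) : Prop :=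
  Function.Bijective (fun s : Fin 4 => fun r : Fin 2 => M r s) ∧
  ∀ s : Fin 3,
    (Finset.univ.filter fun r : Fin 2 => M r s.castSucc ≠ M r s.succ).card = 1

/-- The transition count of row `r` of a `2 × 4j` matrix: the number of pairs of
consecutive columns at which the row entries differ (no wrap-around). -/
def rowTrans2 {j : ℕ} (A : Fin 2 → Fin (4 * j) → Bool) (r : Fin 2) : ℕ :=
  (Finset.univ.filter fun p : Fin (4 * j) × Fin (4 * j) =>
    (p.2 : ℕ) = (p.1 : ℕ) + 1 ∧ A r p.1 ≠ A r p.2).card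

/-- A `1`-equiparting matrix of size `2 × 4j`: a concatenation of `j` 2-bit Gray
codes with the last column of each block equal to the first column of the next
block, such that one row has transition count `d − 1` and the other row has
transition count `d`. -/
def IsEquiparting1 {j : ℕ} (d : ℕ) (A : Fin 2 → Fin (4 * j) → Bool) : Prop :=
  (∀ i : Fin j, IsGrayCode2 (block2 A i)) ∧
  (∀ i : Fin j, ∀ h : i.val + 1 < j, ∀ r : Fin 2,
    block2 A i r 3 = block2 A ⟨i.val + 1, h⟩ r 0) ∧
  ∃ r : Fin 2, rowTrans2 A r = d - 1 ∧ ∀ s : Fin 2, s ≠ r → rowTrans2 A s = d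

/-- Equivalence of `2 × 4j` binary matrices: row permutations and/or
complementing all bits in some rows. -/
def MatEquiv {j : ℕ} (A B : Fin 2 → Fin (4 * j) → Bool) : Prop :=
  ∃ (π : Equiv.Perm (Fin 2)) (ε : Fin 2 → Bool),
    ∀ r s, B r s = xor (ε r) (A (π r) s)

/-!
A 2-bit Gray code flips its rows in the order `d, d', d` with `{d, d'} = {0, 1}`, so up to
complementing rows a linked concatenation of `j` Gray codes is the word `t : Fin j → Fin 2` of its
twice flipped rows. Row `r` has transition count `j + #{i | t i = r}`, and permuting the rows of the
matrix amounts to composing `t` with a permutation of the two letters. For odd `j` the matrix is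
therefore `1`-equiparting exactly when some letter occurs `(j + 1) / 2` times, and each equivalence
class contains exactly one word in which this letter is `0`.
-/

section

open Finset

variable {j : ℕ}

/-- The row `r` of the 2-bit Gray code that starts with the zero column and flips row `d` in its
first and last steps: `0110` for `r = d` and `0011` for the other row. -/
def grayPattern (d r : Fin 2) (s : Fin 4) : Bool :=
  if r = d then s = 1 ∨ s = 2 else 2 ≤ s

lemma grayPattern_zero (d r : Fin 2) : grayPattern d r 0 = false := by
  revert d r; decide

lemma grayPattern_one (d r : Fin 2) : grayPattern d r 1 = decide (r = d) := by
  revert d r; decide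

lemma grayPattern_three (d r : Fin 2) : grayPattern d r 3 = decide (d ≠ r) := by
  revert d r; decide

lemma grayPattern_perm (π : Equiv.Perm (Fin 2)) (d r : Fin 2) (s : Fin 4) :
    grayPattern (π d) (π r) s = grayPattern d r s := by
  simp only [grayPattern, π.injective.eq_iff]

lemma isGrayCode2_xor_grayPattern (a : Fin 2 → Bool) (d : Fin 2) :
    IsGrayCode2 fun r s => a r ^^ grayPattern d r s := by
  constructor
  · refine (Fintype.bijective_iff_injective_and_card _).2 ⟨fun s s' h => ?_, by simp⟩
    have hpattern : ∀ r, grayPattern d r s = grayPattern d r s' := fun r =>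
      Bool.xor_right_inj.1 (congrFun h r)
    clear h
    revert d s s'
    decide
  · simp only [ne_eq, Bool.xor_right_inj]
    revert d
    decide

lemma IsGrayCode2.exists_flip {M : Fin 2 → Fin 4 → Bool} (hM : IsGrayCode2 M) (s : Fin 3) :
    ∃ f : Fin 2, ∀ r, M r s.succ = (M r s.castSucc ^^ decide (r = f)) := by
  obtain ⟨f, hf⟩ := card_eq_one.1 (hM.2 s)
  refine ⟨f, fun r => ?_⟩
  have hr : M r s.castSucc ≠ M r s.succ ↔ r = f := by
    simpa using Finset.ext_iff.1 hf r
  by_cases h : r = f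
  · rw [decide_eq_true h, Bool.xor_true, Bool.eq_not]
    exact (hr.2 h).symm
  · rw [decide_eq_false h, Bool.xor_false]
    exact (not_ne_iff.1 (mt hr.1 h)).symm

lemma IsGrayCode2.exists_eq_xor_grayPattern {M : Fin 2 → Fin 4 → Bool} (hM : IsGrayCode2 M) :
    ∃ d : Fin 2, ∀ r s, M r s = (M r 0 ^^ grayPattern d r s) := by
  obtain ⟨f₀, h₀⟩ := hM.exists_flip 0
  obtain ⟨f₁, h₁⟩ := hM.exists_flip 1
  obtain ⟨f₂, h₂⟩ := hM.exists_flip 2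
  simp only [Fin.isValue, Fin.reduceSucc, Fin.reduceCastSucc] at h₀ h₁ h₂
  -- Flipping the same row twice in succession would repeat a column.
  have h₀₁ : f₁ ≠ f₀ := by
    rintro rfl
    have hcol : (2 : Fin 4) = 0 := hM.1.1 <| funext fun r => by simp [h₁, h₀]
    exact absurd hcol (by decide)
  have h₁₂ : f₂ ≠ f₁ := by
    rintro rfl
    have hcol : (3 : Fin 4) = 1 := hM.1.1 <| funext fun r => by simp [h₂, h₁]
    exact absurd hcol (by decide)
  obtain rfl : f₂ = f₀ := by omega
  refine ⟨f₂, fun r s => ?_⟩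
  have hflip : decide (r = f₁) = !decide (r = f₂) := by grind
  fin_cases s <;> simp [h₀, h₁, h₂, hflip, grayPattern]

lemma card_transitions_xor_grayPattern (a : Bool) (d r : Fin 2) :
    #{s : Fin 3 | (a ^^ grayPattern d r s.castSucc) ≠ (a ^^ grayPattern d r s.succ)} =
      1 + if d = r then 1 else 0 := by
  simp only [ne_eq, Bool.xor_right_inj]
  revert d r
  decide

/-- The columns of a `2 × 4j` matrix, indexed by block and by position inside the block. -/
def columnEquiv (j : ℕ) : Fin j × Fin 4 ≃ Fin (4 * j) :=
  finProdFinEquiv.trans (finCongr (mul_comm j 4))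

lemma columnEquiv_val (i : Fin j) (s : Fin 4) : (columnEquiv j (i, s)).val = 4 * i + s :=
  add_comm _ _

lemma val_eq_columnEquiv_castSucc_add_one_iff {c : Fin (4 * j)} {i : Fin j} {s : Fin 3} :
    c.val = columnEquiv j (i, s.castSucc) + 1 ↔ c = columnEquiv j (i, s.succ) := by
  simp only [Fin.ext_iff, columnEquiv_val, Fin.val_castSucc, Fin.val_succ, add_assoc]

lemma exists_eq_columnEquiv_zero_of_val_eq {c : Fin (4 * j)} {i : Fin j}
    (hc : c.val = columnEquiv j (i, 3) + 1) :
    ∃ h : i.val + 1 < j, c = columnEquiv j (⟨i.val + 1, h⟩, 0) := by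
  rw [columnEquiv_val, show ((3 : Fin 4) : ℕ) = 3 from rfl] at hc
  refine ⟨by omega, Fin.ext ?_⟩
  simp only [hc, columnEquiv_val, Fin.val_zero]
  omega

lemma block2_eq_apply_columnEquiv (A : Fin 2 → Fin (4 * j) → Bool) (i : Fin j) (r : Fin 2)
    (s : Fin 4) : block2 A i r s = A r (columnEquiv j (i, s)) :=
  congrArg (A r) (Fin.ext (columnEquiv_val i s).symm)

/-- A concatenation of `j` 2-bit Gray codes, each starting with the last column of its
predecessor: an equiparting matrix without the condition on transition counts. -/
def IsGrayConcat (A : Fin 2 → Fin (4 * j) → Bool) : Prop :=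
  (∀ i : Fin j, IsGrayCode2 (block2 A i)) ∧
  ∀ i : Fin j, ∀ h : i.val + 1 < j, ∀ r : Fin 2, block2 A i r 3 = block2 A ⟨i.val + 1, h⟩ r 0

/-- The first entry of block `i` in row `r` when row `r` starts with `0` and row `t k` flips twice
in each block `k`: the parity of the number of earlier blocks in which row `r` flips only once. -/
def blockStart (t : Fin j → Fin 2) (r : Fin 2) (i : Fin j) : Bool :=
  Odd #{k ∈ Iio i | t k ≠ r}

lemma blockStart_zero [NeZero j] (t : Fin j → Fin 2) (r : Fin 2) : blockStart t r 0 = false := by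
  have hIio : Iio (0 : Fin j) = ∅ := by ext; simp
  simp [blockStart, hIio]

lemma blockStart_succ (t : Fin j → Fin 2) (r : Fin 2) (i : Fin j) (h : i.val + 1 < j) :
    blockStart t r ⟨i.val + 1, h⟩ = (blockStart t r i ^^ decide (t i ≠ r)) := by
  have hIio : Iio (⟨i.val + 1, h⟩ : Fin j) = insert i (Iio i) := by
    ext k; simp only [mem_Iio, mem_insert, Fin.lt_def, Fin.ext_iff]; omega
  have hmem : i ∉ (Iio i).filter (t · ≠ r) := by simp
  simp only [blockStart, hIio, filter_insert]
  by_cases hi : t i = r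
  · simp [hi]
  · rw [if_pos hi, card_insert_of_notMem hmem]
    simp [Nat.odd_add_one, hi, -Nat.not_odd_iff_even]

/-- The concatenation of Gray codes with zero first column in which row `t i` flips twice in
block `i`. -/
def normalMatrix (t : Fin j → Fin 2) (r : Fin 2) (c : Fin (4 * j)) : Bool :=
  let p := (columnEquiv j).symm c
  blockStart t r p.1 ^^ grayPattern (t p.1) r p.2

lemma block2_normalMatrix (t : Fin j → Fin 2) (i : Fin j) (r : Fin 2) (s : Fin 4) :
    block2 (normalMatrix t) i r s = (blockStart t r i ^^ grayPattern (t i) r s) := by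
  simp only [block2_eq_apply_columnEquiv, normalMatrix, Equiv.symm_apply_apply]

lemma isGrayConcat_normalMatrix (t : Fin j → Fin 2) : IsGrayConcat (normalMatrix t) := by
  refine ⟨fun i => ?_, fun i h r => ?_⟩
  · rw [funext₂ (block2_normalMatrix t i)]
    exact isGrayCode2_xor_grayPattern (blockStart t · i) (t i)
  · rw [block2_normalMatrix, block2_normalMatrix, blockStart_succ, grayPattern_three,
      grayPattern_zero, Bool.xor_false]

lemma normalMatrix_perm (π : Equiv.Perm (Fin 2)) (t : Fin j → Fin 2) (r : Fin 2)
    (c : Fin (4 * j)) : normalMatrix (π ∘ t) (π r) c = normalMatrix t r c := by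
  simp only [normalMatrix, blockStart, Function.comp_apply, grayPattern_perm, ne_eq,
    π.injective.eq_iff]

lemma eq_of_normalMatrix_eq_xor {t u : Fin j → Fin 2} (ε : Fin 2 → Bool)
    (h : ∀ r c, normalMatrix u r c = (ε r ^^ normalMatrix t r c)) : u = t := by
  have hflip : ∀ (v : Fin j → Fin 2) i r, (block2 (normalMatrix v) i r 0 ^^
      block2 (normalMatrix v) i r 1) = decide (r = v i) := fun v i r => by
    simp [block2_normalMatrix, grayPattern_zero, grayPattern_one]
  funext i
  have hi : decide (u i = u i) = decide (u i = t i) := by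
    rw [← hflip u i, ← hflip t i]
    have hcancel : ∀ a b c : Bool, ((a ^^ b) ^^ (a ^^ c)) = (b ^^ c) := by decide
    simp only [block2_eq_apply_columnEquiv, h, hcancel]
  simpa using hi

lemma normalMatrix_injective : Function.Injective (normalMatrix (j := j)) := fun u t h =>
  eq_of_normalMatrix_eq_xor (fun _ => false) fun r c => by rw [h, Bool.false_xor]

lemma IsGrayConcat.exists_normalMatrix_eq_xor {A : Fin 2 → Fin (4 * j) → Bool}
    (hA : IsGrayConcat A) :
    ∃ (t : Fin j → Fin 2) (ε : Fin 2 → Bool), ∀ r c, normalMatrix t r c = (ε r ^^ A r c) := by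
  choose t ht using fun i => (hA.1 i).exists_eq_xor_grayPattern
  obtain _ | n := j
  · exact ⟨t, fun _ => false, fun _ c => c.elim0⟩
  have hstart : ∀ i r, block2 A i r 0 = (A r 0 ^^ blockStart t r i) := by
    intro i r
    induction i using Fin.induction with
    | zero => rw [blockStart_zero, Bool.xor_false]; rfl
    | succ i ih =>
      calc block2 A i.succ r 0 = block2 A i.castSucc r 3 := (hA.2 i.castSucc i.succ.isLt r).symm
        _ = (A r 0 ^^ (blockStart t r i.castSucc ^^ decide (t i.castSucc ≠ r))) := by
          rw [ht, ih, grayPattern_three, Bool.xor_assoc]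
        _ = (A r 0 ^^ blockStart t r i.succ) := by
          rw [← blockStart_succ t r i.castSucc i.succ.isLt]; rfl
  refine ⟨t, fun r => A r 0, fun r c => ?_⟩
  obtain ⟨⟨i, s⟩, rfl⟩ := (columnEquiv _).surjective c
  simp only [← block2_eq_apply_columnEquiv A i r s,
    ← block2_eq_apply_columnEquiv (normalMatrix t) i r s, block2_normalMatrix, ht i r s, hstart]
  simp

lemma rowTrans2_eq_sum_block2 (A : Fin 2 → Fin (4 * j) → Bool) (r : Fin 2)
    (hlink : ∀ i : Fin j, ∀ h : i.val + 1 < j, block2 A i r 3 = block2 A ⟨i.val + 1, h⟩ r 0) :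
    rowTrans2 A r = ∑ i, #{s : Fin 3 | block2 A i r s.castSucc ≠ block2 A i r s.succ} := by
  have hstep : ∀ i (s : Fin 3), #{c : Fin (4 * j) | c.val = columnEquiv j (i, s.castSucc) + 1 ∧
      A r (columnEquiv j (i, s.castSucc)) ≠ A r c} =
        if block2 A i r s.castSucc ≠ block2 A i r s.succ then 1 else 0 := by
    intro i s
    simp only [val_eq_columnEquiv_castSucc_add_one_iff, ← filter_filter, filter_eq',
      mem_univ, if_true, filter_singleton, block2_eq_apply_columnEquiv]
    split_ifs <;> rfl
  have hlast : ∀ i, #{c : Fin (4 * j) | c.val = columnEquiv j (i, 3) + 1 ∧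
      A r (columnEquiv j (i, 3)) ≠ A r c} = 0 := by
    intro i
    refine card_eq_zero.2 (filter_eq_empty_iff.2 fun c _ ⟨hc, hne⟩ => hne ?_)
    obtain ⟨hi, rfl⟩ := exists_eq_columnEquiv_zero_of_val_eq hc
    rw [← block2_eq_apply_columnEquiv A, ← block2_eq_apply_columnEquiv A, hlink i hi]
  calc rowTrans2 A r
      = ∑ c : Fin (4 * j), #{c' : Fin (4 * j) | c'.val = c + 1 ∧ A r c ≠ A r c'} := by
        simp only [rowTrans2, card_filter, Fintype.sum_prod_type]
    _ = ∑ i, ∑ s : Fin 4, #{c : Fin (4 * j) | c.val = columnEquiv j (i, s) + 1 ∧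
          A r (columnEquiv j (i, s)) ≠ A r c} := by
        rw [← (columnEquiv j).sum_comp, Fintype.sum_prod_type]
    _ = ∑ i, #{s : Fin 3 | block2 A i r s.castSucc ≠ block2 A i r s.succ} := by
        refine sum_congr rfl fun i _ => ?_
        rw [Fin.sum_univ_castSucc, sum_congr rfl fun s _ => hstep i s, ← card_filter]
        exact Nat.add_eq_left.2 (hlast i)

lemma rowTrans2_normalMatrix (t : Fin j → Fin 2) (r : Fin 2) :
    rowTrans2 (normalMatrix t) r = j + #{i | t i = r} := by
  rw [rowTrans2_eq_sum_block2 _ r fun i h => (isGrayConcat_normalMatrix t).2 i h r]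
  have hblock : ∀ i, #{s : Fin 3 | block2 (normalMatrix t) i r s.castSucc ≠
      block2 (normalMatrix t) i r s.succ} = 1 + if t i = r then 1 else 0 := fun i => by
    simpa only [block2_normalMatrix] using
      card_transitions_xor_grayPattern (blockStart t r i) (t i) r
  simp [hblock, sum_add_distrib]

lemma rowTrans2_eq_of_eq_xor {A B : Fin 2 → Fin (4 * j) → Bool} {r : Fin 2} (b : Bool)
    (h : ∀ c, B r c = (b ^^ A r c)) : rowTrans2 B r = rowTrans2 A r := by
  simp only [rowTrans2, h, ne_eq, Bool.xor_right_inj]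

lemma card_fiber_add_card_fiber {α : Type*} [Fintype α] (t : α → Fin 2) {r s : Fin 2}
    (h : r ≠ s) : #{i | t i = r} + #{i | t i = s} = Fintype.card α := by
  have hs : ∀ i, t i = s ↔ ¬ t i = r := fun i => by omega
  simp only [hs, card_filter_add_card_filter_not, card_univ]

lemma card_filter_card_fiber_eq (α : Type*) [Fintype α] [DecidableEq α] (r : Fin 2) (m : ℕ) :
    #{t : α → Fin 2 | #{i | t i = r} = m} = (Fintype.card α).choose m := by
  have hother : r + 1 ≠ r := by revert r; decide
  rw [← card_univ, ← card_powersetCard]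
  refine card_nbij' (fun t => ({i | t i = r} : Finset α)) (fun S i => if i ∈ S then r else r + 1)
    ?_ ?_ ?_ ?_
  · simp [Set.MapsTo]
  · simp [Set.MapsTo, ite_eq_left_iff, hother]
  · intro t _
    funext i
    simp only [mem_filter_univ]
    split_ifs <;> omega
  · intro S _
    ext
    simp [ite_eq_left_iff, hother]

lemma card_fiber_eq_iff {α : Type*} [Fintype α] {m : ℕ} (hm : 2 * m ≠ Fintype.card α)
    {t : α → Fin 2} {r : Fin 2} (hr : #{i | t i = r} = m) (s : Fin 2) :
    #{i | t i = s} = m ↔ s = r := by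
  refine ⟨fun hs => ?_, fun h => h ▸ hr⟩
  by_contra h
  have := card_fiber_add_card_fiber t h
  omega

lemma perm_fin_two_eq_swap {π : Equiv.Perm (Fin 2)} {r s : Fin 2} (h : π r = s) :
    π = Equiv.swap r s := by
  revert π r s
  decide

lemma existsUnique_perm_comp {α : Type*} [Fintype α] {m : ℕ} (hm : 2 * m ≠ Fintype.card α)
    {t : α → Fin 2} {r : Fin 2} (hr : #{i | t i = r} = m) (s : Fin 2) :
    ∃! u : α → Fin 2, #{i | u i = s} = m ∧ ∃ π : Equiv.Perm (Fin 2), u = π ∘ t := by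
  have hfiber : ∀ π : Equiv.Perm (Fin 2), #{i | (π ∘ t) i = s} = m ↔ π r = s := by
    intro π
    simp only [Function.comp_apply, ← Equiv.eq_symm_apply]
    rw [card_fiber_eq_iff hm hr, eq_comm, Equiv.eq_symm_apply]
  refine ⟨Equiv.swap r s ∘ t, ⟨(hfiber _).2 (Equiv.swap_apply_left r s), _, rfl⟩, ?_⟩
  rintro _ ⟨hcard, π, rfl⟩
  rw [perm_fin_two_eq_swap ((hfiber π).1 hcard)]

lemma MatEquiv.symm {A B : Fin 2 → Fin (4 * j) → Bool} (h : MatEquiv A B) : MatEquiv B A := by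
  obtain ⟨π, ε, h⟩ := h
  exact ⟨π⁻¹, fun r => ε (π⁻¹ r), fun r s => by simp [h]⟩

lemma MatEquiv.trans {A B C : Fin 2 → Fin (4 * j) → Bool} (hAB : MatEquiv A B)
    (hBC : MatEquiv B C) : MatEquiv A C := by
  obtain ⟨π, ε, hAB⟩ := hAB
  obtain ⟨ρ, δ, hBC⟩ := hBC
  exact ⟨π * ρ, fun r => δ r ^^ ε (ρ r), fun r s => by simp [hAB, hBC]⟩

lemma matEquiv_normalMatrix_iff {t u : Fin j → Fin 2} :
    MatEquiv (normalMatrix t) (normalMatrix u) ↔ ∃ π : Equiv.Perm (Fin 2), u = π ∘ t := by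
  constructor
  · rintro ⟨π, ε, h⟩
    refine ⟨π⁻¹, eq_of_normalMatrix_eq_xor ε fun r c => ?_⟩
    rw [h, ← normalMatrix_perm π⁻¹ t, Equiv.Perm.coe_inv, Equiv.symm_apply_apply]
  · rintro ⟨π, rfl⟩
    refine ⟨π⁻¹, fun _ => false, fun r c => ?_⟩
    rw [Bool.false_xor, ← normalMatrix_perm π t, Equiv.Perm.coe_inv, Equiv.apply_symm_apply]

lemma IsEquiparting1.exists_matEquiv_normalMatrix {d : ℕ} {A : Fin 2 → Fin (4 * j) → Bool}
    (hA : IsEquiparting1 d A) :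
    ∃ t, IsEquiparting1 d (normalMatrix t) ∧ MatEquiv A (normalMatrix t) := by
  obtain ⟨hgray, hlink, htrans⟩ := hA
  obtain ⟨t, ε, ht⟩ := IsGrayConcat.exists_normalMatrix_eq_xor ⟨hgray, hlink⟩
  obtain ⟨hgray', hlink'⟩ := isGrayConcat_normalMatrix t
  refine ⟨t, ⟨hgray', hlink', ?_⟩, 1, ε, ht⟩
  simpa only [fun r => rowTrans2_eq_of_eq_xor (ε r) (ht r)] using htrans

lemma isEquiparting1_normalMatrix_iff (hj : Odd j) {t : Fin j → Fin 2} :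
    IsEquiparting1 ((3 * j + 1) / 2) (normalMatrix t) ↔ ∃ r, #{i | t i = r} = (j + 1) / 2 := by
  obtain ⟨k, rfl⟩ := hj
  have hrows : ∀ r s : Fin 2, s ≠ r → #{i | t i = r} + #{i | t i = s} = 2 * k + 1 := by
    intro r s h
    simpa using card_fiber_add_card_fiber t h.symm
  have hother : ∀ r : Fin 2, r + 1 ≠ r := by decide
  simp only [IsEquiparting1, rowTrans2_normalMatrix]
  constructor
  · rintro ⟨-, -, r, -, hs⟩
    have := hs _ (hother r)
    exact ⟨r + 1, by omega⟩
  · rintro ⟨s, hs⟩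
    obtain ⟨hgray, hlink⟩ := isGrayConcat_normalMatrix t
    refine ⟨hgray, hlink, s + 1, ?_, fun r hr => ?_⟩
    · have := hrows _ _ (hother s).symm
      omega
    · obtain rfl : r = s := by omega
      omega

end

/-- For odd `j ≥ 1` and `d = (3j+1)/2`, the number of non-equivalent
`1`-equiparting matrices of size `2 × 4j` equals `C(j, (j+1)/2)`: there is a set
of representatives of that cardinality meeting every equivalence class of
`1`-equiparting matrices exactly once. -/
theorem count_one_equiparting (j : ℕ) (h1 : 1 ≤ j) (hj : Odd j) :
    ∃ R : Finset (Fin 2 → Fin (4 * j) → Bool),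
      R.card = Nat.choose j ((j + 1) / 2) ∧
      (∀ A ∈ R, IsEquiparting1 ((3 * j + 1) / 2) A) ∧
      ∀ A : Fin 2 → Fin (4 * j) → Bool, IsEquiparting1 ((3 * j + 1) / 2) A →
        ∃! B, B ∈ R ∧ MatEquiv A B := by
  let T : Finset (Fin j → Fin 2) := {t | Finset.card {i | t i = 0} = (j + 1) / 2}
  refine ⟨T.map ⟨normalMatrix, normalMatrix_injective⟩, ?_, ?_, fun A hA => ?_⟩
  · rw [Finset.card_map, card_filter_card_fiber_eq, Fintype.card_fin]
  · simp only [Finset.forall_mem_map, T, Finset.mem_filter_univ]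
    exact fun t ht => (isEquiparting1_normalMatrix_iff hj).2 ⟨0, ht⟩
  · obtain ⟨t, ht, hAt⟩ := hA.exists_matEquiv_normalMatrix
    obtain ⟨r, hr⟩ := (isEquiparting1_normalMatrix_iff hj).1 ht
    have hsize : 2 * ((j + 1) / 2) ≠ Fintype.card (Fin j) := by
      rw [Fintype.card_fin]
      grind
    obtain ⟨u, ⟨hu, htu⟩, huniq⟩ := existsUnique_perm_comp hsize hr 0
    refine ⟨normalMatrix u, ⟨by simpa [T] using hu,
      hAt.trans (matEquiv_normalMatrix_iff.2 htu)⟩, ?_⟩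
    rintro B ⟨hB, hAB⟩
    obtain ⟨v, hv, rfl⟩ := Finset.mem_map.1 hB
    have htv := matEquiv_normalMatrix_iff.1 (hAt.symm.trans hAB)
    exact congrArg normalMatrix (huniq v ⟨by simpa [T] using hv, htv⟩)
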